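/- Let t ≥ 1 be an integer and let c > 0, ε > 0 be constants. Let x₁, …, x_m ∈ ℝ^{1×d} be row vectors with ‖x_j‖₂ = 1 for all j, let α ∈ ℝ^m be a probability vector, and let a = (Σ_{j=1}^m α_j x_j) W_V W_O be nonzero. Let x' ∈ ℝ^{1×d} satisfy ‖x'‖₂ = 1 and a x'ᵀ ≥ (1 − δ)‖a‖₂ with 0 < δ ≤ (cε/(λ_Q λ_K λ_V λ_O))². Fix ℓ ∈ {1, …, m} and suppose x_ℓ W x_ℓᵀ ≥ c and x_ℓ W x_ℓᵀ ≥ ε^{-1} |x_j W x_ℓᵀ| for all j ≠ ℓ. Then (x_ℓ W x_ℓᵀ / ((t+1)‖a‖₂))·(α_ℓ − (1+√2)ε) ≤ (1/(t+1))·x' W_Q W_Kᵀ x_ℓᵀ ≤ (x_ℓ W x_ℓᵀ / ((t+1)‖a‖₂))·(α_ℓ + (1+√2)ε). -/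

import Mathlib

open Matrix BigOperators

/-- Euclidean norm of a row vector in ℝ^{1×d}. -/
noncomputable def rowNorm {d : ℕ} (x : Fin d → ℝ) : ℝ := Real.sqrt (∑ i, x i ^ 2)

/-- The ℓ²-operator norm (largest singular value) of a d×d real matrix. -/
noncomputable def opNorm2 {d : ℕ} (M : Matrix (Fin d) (Fin d) ℝ) : ℝ :=
  ‖(Matrix.toEuclideanLin M).toContinuousLinearMap‖


theorem rowNorm_eq {d : ℕ} (x : Fin d → ℝ) : rowNorm x = ‖WithLp.toLp 2 x‖ := by
  simp [rowNorm, EuclideanSpace.norm_eq]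

theorem rowNorm_nn {d : ℕ} (x : Fin d → ℝ) : 0 ≤ rowNorm x := Real.sqrt_nonneg _

theorem rowNorm_sq' {d : ℕ} (x : Fin d → ℝ) : rowNorm x ^ 2 = x ⬝ᵥ x := by
  unfold rowNorm
  rw [Real.sq_sqrt (Finset.sum_nonneg fun i _ => sq_nonneg _)]
  simp [dotProduct, sq]

theorem abs_dot_le {d : ℕ} (x y : Fin d → ℝ) : |x ⬝ᵥ y| ≤ rowNorm x * rowNorm y := by
  rw [rowNorm_eq, rowNorm_eq]
  have h := abs_real_inner_le_norm (WithLp.toLp 2 x) (WithLp.toLp 2 y)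
  have e : inner ℝ (WithLp.toLp 2 x) (WithLp.toLp 2 y) = x ⬝ᵥ y := by
    simp [PiLp.inner_apply, dotProduct, mul_comm]
  rwa [e] at h

theorem mulVec_le {d : ℕ} (M : Matrix (Fin d) (Fin d) ℝ) (x : Fin d → ℝ) :
    rowNorm (M *ᵥ x) ≤ opNorm2 M * rowNorm x := by
  rw [rowNorm_eq, rowNorm_eq]
  exact (Matrix.toEuclideanLin M).toContinuousLinearMap.le_opNorm (WithLp.toLp 2 x)

theorem vecMul_le {d : ℕ} (M : Matrix (Fin d) (Fin d) ℝ) (x : Fin d → ℝ) :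
    rowNorm (x ᵥ* M) ≤ opNorm2 M * rowNorm x := by
  have h1 : rowNorm (x ᵥ* M) ^ 2 = x ⬝ᵥ (M *ᵥ (x ᵥ* M)) := by
    rw [rowNorm_sq', ← Matrix.dotProduct_mulVec]
  have h2 := (le_abs_self _).trans (abs_dot_le x (M *ᵥ (x ᵥ* M)))
  have h3 := mulVec_le M (x ᵥ* M)
  have h4 := mul_le_mul_of_nonneg_left h3 (rowNorm_nn x)
  rcases (rowNorm_nn (x ᵥ* M)).eq_or_lt with h | h
  · rw [← h]; exact mul_nonneg (norm_nonneg _) (rowNorm_nn x)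
  · refine le_of_mul_le_mul_right ?_ h
    nlinarith

theorem rowNorm_comb {d m : ℕ} (x : Fin m → (Fin d → ℝ)) (hx : ∀ j, rowNorm (x j) = 1)
    (α : Fin m → ℝ) (hα0 : ∀ j, 0 ≤ α j) (hα1 : ∑ j, α j = 1) :
    rowNorm (∑ j, α j • x j) ≤ 1 := by
  rw [rowNorm_eq, WithLp.toLp_sum]
  refine (norm_sum_le _ _).trans ?_
  rw [← hα1]
  refine Finset.sum_le_sum fun j _ => ?_
  rw [WithLp.toLp_smul, norm_smul, ← rowNorm_eq, hx, Real.norm_of_nonneg (hα0 j), mul_one]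

/-- Let t ≥ 1 be an integer and let c > 0, ε > 0 be constants. Let x₁, …, x_m be unit
row vectors, α a probability vector, and a = (Σ_j α_j x_j) W_V W_O nonzero. Let x'
satisfy ‖x'‖₂ = 1 and a x'ᵀ ≥ (1 − δ)‖a‖₂ with 0 < δ ≤ (cε/(λ_Q λ_K λ_V λ_O))².
Fix ℓ and suppose x_ℓ W x_ℓᵀ ≥ c and x_ℓ W x_ℓᵀ ≥ ε^{-1} |x_j W x_ℓᵀ| for all j ≠ ℓ.
Then (x_ℓ W x_ℓᵀ / ((t+1)‖a‖₂))·(α_ℓ − (1+√2)ε) ≤ (1/(t+1))·x' W_Q W_Kᵀ x_ℓᵀ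
  ≤ (x_ℓ W x_ℓᵀ / ((t+1)‖a‖₂))·(α_ℓ + (1+√2)ε). -/
theorem stmt5 {d m : ℕ} (t : ℕ) (ht : 1 ≤ t)
    (c ε δ : ℝ) (hc : 0 < c) (hε : 0 < ε)
    (WQ WK WV WO : Matrix (Fin d) (Fin d) ℝ)
    (hsvQ : 0 < opNorm2 WQ) (hsvK : 0 < opNorm2 WK)
    (hsvV : 0 < opNorm2 WV) (hsvO : 0 < opNorm2 WO)
    (W : Matrix (Fin d) (Fin d) ℝ) (hW : W = WV * WO * WQ * WKᵀ)
    (x : Fin m → (Fin d → ℝ)) (hx : ∀ j, rowNorm (x j) = 1)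
    (α : Fin m → ℝ) (hα0 : ∀ j, 0 ≤ α j) (hα1 : ∑ j, α j = 1)
    (a : Fin d → ℝ) (ha : a = (∑ j, α j • x j) ᵥ* (WV * WO)) (ha0 : a ≠ 0)
    (x' : Fin d → ℝ) (hx' : rowNorm x' = 1)
    (hax' : a ⬝ᵥ x' ≥ (1 - δ) * rowNorm a)
    (hδ0 : 0 < δ)
    (hδ : δ ≤ (c * ε / (opNorm2 WQ * opNorm2 WK * opNorm2 WV * opNorm2 WO)) ^ 2)
    (ℓ : Fin m)
    (hdiag : (x ℓ ᵥ* W) ⬝ᵥ x ℓ ≥ c)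
    (hdom : ∀ j, j ≠ ℓ → (x ℓ ᵥ* W) ⬝ᵥ x ℓ ≥ ε⁻¹ * |(x j ᵥ* W) ⬝ᵥ x ℓ|) :
    ((x ℓ ᵥ* W) ⬝ᵥ x ℓ / (((t : ℝ) + 1) * rowNorm a)) * (α ℓ - (1 + Real.sqrt 2) * ε) ≤
        (1 / ((t : ℝ) + 1)) * ((x' ᵥ* (WQ * WKᵀ)) ⬝ᵥ x ℓ) ∧
      (1 / ((t : ℝ) + 1)) * ((x' ᵥ* (WQ * WKᵀ)) ⬝ᵥ x ℓ) ≤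
        ((x ℓ ᵥ* W) ⬝ᵥ x ℓ / (((t : ℝ) + 1) * rowNorm a)) * (α ℓ + (1 + Real.sqrt 2) * ε) := by
  have hN : 0 < rowNorm a := by
    rcases (rowNorm_nn a).eq_or_lt with h | h
    · exfalso
      have h2 := rowNorm_sq' a
      rw [← h] at h2
      exact ha0 (dotProduct_self_eq_zero.1 (by simpa using h2.symm))
    · exact h
  set D := (x ℓ ᵥ* W) ⬝ᵥ x ℓ with hD
  set N := rowNorm a with hNdef
  set P := (x' ᵥ* (WQ * WKᵀ)) ⬝ᵥ x ℓ with hP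
  have hDpos : 0 < D := lt_of_lt_of_le hc hdiag
  have hNle : N ≤ opNorm2 WV * opNorm2 WO := by
    have h1 := vecMul_le WO ((∑ j, α j • x j) ᵥ* WV)
    have h2 := vecMul_le WV (∑ j, α j • x j)
    have h3 := rowNorm_comb x hx α hα0 hα1
    rw [Matrix.vecMul_vecMul, ← ha] at h1
    have h4 : rowNorm ((∑ j, α j • x j) ᵥ* WV) ≤ opNorm2 WV := by nlinarith
    nlinarith
  -- the dominated sum
  have hA : |(a ᵥ* (WQ * WKᵀ)) ⬝ᵥ x ℓ - α ℓ * D| ≤ ε * D := by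
    have e : (a ᵥ* (WQ * WKᵀ)) ⬝ᵥ x ℓ = ∑ j, α j * ((x j ᵥ* W) ⬝ᵥ x ℓ) := by
      rw [ha, Matrix.vecMul_vecMul, ← Matrix.mul_assoc, ← hW, Matrix.sum_vecMul, sum_dotProduct]
      simp [Matrix.smul_vecMul]
    rw [e, ← Finset.add_sum_erase _ _ (Finset.mem_univ ℓ), ← hD, add_sub_cancel_left]
    refine (Finset.abs_sum_le_sum_abs _ _).trans ?_
    have h1 : ∀ j ∈ Finset.univ.erase ℓ, |α j * ((x j ᵥ* W) ⬝ᵥ x ℓ)| ≤ α j * (ε * D) := by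
      intro j hj
      rw [abs_mul, abs_of_nonneg (hα0 j)]
      refine mul_le_mul_of_nonneg_left ?_ (hα0 j)
      have := hdom j (Finset.ne_of_mem_erase hj)
      rwa [ge_iff_le, inv_mul_le_iff₀ hε] at this
    refine (Finset.sum_le_sum h1).trans ?_
    rw [← Finset.sum_mul]
    have h2 : ∑ j ∈ Finset.univ.erase ℓ, α j ≤ 1 := by
      rw [← hα1]
      exact Finset.sum_le_sum_of_subset_of_nonneg (Finset.erase_subset _ _) fun j _ _ => hα0 j
    have : 0 < ε * D := mul_pos hε hDpos
    nlinarith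
  have hR : |N * P - (a ᵥ* (WQ * WKᵀ)) ⬝ᵥ x ℓ| ≤ Real.sqrt 2 * ε * D := by
    have e : N * P - (a ᵥ* (WQ * WKᵀ)) ⬝ᵥ x ℓ
        = ((N • x' - a) ᵥ* WQ) ⬝ᵥ (x ℓ ᵥ* WK) := by
      rw [hP, ← Matrix.mulVec_transpose WK, Matrix.dotProduct_mulVec, Matrix.vecMul_vecMul,
        Matrix.sub_vecMul, sub_dotProduct, Matrix.smul_vecMul, smul_dotProduct, smul_eq_mul]
    set r := N • x' - a with hr
    have hr2 : rowNorm r ^ 2 ≤ 2 * δ * N ^ 2 := by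
      have h1 : rowNorm r ^ 2 = N ^ 2 * rowNorm x' ^ 2 - 2 * N * (a ⬝ᵥ x') + N ^ 2 := by
        rw [hNdef, rowNorm_sq' r, rowNorm_sq' x', ← hNdef]
        have : N ^ 2 = a ⬝ᵥ a := rowNorm_sq' a
        simp only [hr, sub_dotProduct, dotProduct_sub, smul_dotProduct, dotProduct_smul, smul_eq_mul,
          dotProduct_comm x' a]
        rw [← this]; ring
      rw [h1, hx']
      nlinarith
    set q := opNorm2 WQ
    set k := opNorm2 WK
    set v := opNorm2 WV
    set o := opNorm2 WO
    set s := c * ε / (q * k * v * o) with hs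
    have hs0 : 0 < s := by positivity
    have hsq : s * (q * k * v * o) = c * ε := by rw [hs]; field_simp
    have hr3 : rowNorm r ≤ Real.sqrt 2 * s * N := by
      refine abs_le_of_sq_le_sq' ?_ (by positivity) |>.2
      rw [mul_pow, mul_pow, Real.sq_sqrt (by norm_num)]
      refine hr2.trans ?_
      gcongr
    have h5 : rowNorm (r ᵥ* WQ) ≤ q * rowNorm r := vecMul_le WQ r
    have h6 : rowNorm (x ℓ ᵥ* WK) ≤ k := by
      have := vecMul_le WK (x ℓ)
      rwa [hx, mul_one] at this
    rw [e]
    calc _ ≤ rowNorm (r ᵥ* WQ) * rowNorm (x ℓ ᵥ* WK) := abs_dot_le _ _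
      _ ≤ (q * (Real.sqrt 2 * s * (v * o))) * k := by
        refine mul_le_mul (h5.trans ?_) h6 (rowNorm_nn _) (by positivity)
        refine mul_le_mul_of_nonneg_left (hr3.trans ?_) hsvQ.le
        gcongr
      _ = Real.sqrt 2 * (s * (q * k * v * o)) := by ring
      _ = Real.sqrt 2 * ε * c := by rw [hsq]; ring
      _ ≤ _ := by gcongr
  rw [abs_le] at hA hR
  have ht0 : (0 : ℝ) < (t : ℝ) + 1 := by positivity
  have e1 : ∀ z, D / (((t : ℝ) + 1) * N) * z = (1 / ((t : ℝ) + 1)) * (D * z / N) := by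
    intro z; field_simp
  rw [e1, e1]
  constructor
  · refine mul_le_mul_of_nonneg_left ?_ (by positivity)
    rw [div_le_iff₀ hN]; nlinarith
  · refine mul_le_mul_of_nonneg_left ?_ (by positivity)
    rw [le_div_iff₀ hN]; nlinarith
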